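/- arXiv:2312.10252 — 4 statements merged into one kernel-verified Lean document; each statement's English description precedes it below -/
import Mathlib

section
/- Let a ∈ ℕ, let λ ∈ [0,1], and let ψ, φ : ℕ → ℝ be sequences with φ(k) > 0 for all k, such that φ is increasing and k ↦ ψ(k)/φ(k) is increasing. For n ≥ a+1 define F(n) = λ·∑_{k=a}^{n-1} ψ(k) + (1−λ)·∑_{k=a+1}^{n} ψ(k) and G(n) = λ·∑_{k=a}^{n-1} φ(k) + (1−λ)·∑_{k=a+1}^{n} φ(k). Then the function n ↦ F(n)/G(n) is increasing for integers n ≥ a+1. -/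
/-!
Shifting the index of the Nabla sum turns a Diamond-Alpha sum into the ordinary sum of the averaged
terms `lam * f k + (1 - lam) * f (k + 1)`. The quotient of the averaged terms of `ψ` and `φ` at `k`
is a weighted mediant of `ψ k / φ k` and `ψ (k + 1) / φ (k + 1)`, hence lies between them, and so
is again increasing in `k`. A quotient of sums is a mean of the quotients of the terms with the
denominators as weights, so appending terms with larger quotients can only increase it.
-/

section Ring

variable {R : Type*} [Ring R]

/-- The Diamond-Alpha integral of `f` from `a` to `n` on the time scale `ℕ`, with parameter `lam`:
the combination of the Delta integral (weight `lam`), which sums over `a ≤ k < n`, and the Nabla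
integral (weight `1 - lam`), which sums over `a < k ≤ n`. -/
def diamondAlphaSum (lam : R) (a : ℕ) (f : ℕ → R) (n : ℕ) : R :=
  lam * ∑ k ∈ Finset.Ico a n, f k + (1 - lam) * ∑ k ∈ Finset.Ico (a + 1) (n + 1), f k

theorem diamondAlphaSum_eq_sum (lam : R) (a : ℕ) (f : ℕ → R) (n : ℕ) :
    diamondAlphaSum lam a f n =
      ∑ k ∈ Finset.Ico a n, (lam * f k + (1 - lam) * f (k + 1)) := by
  rw [diamondAlphaSum, ← Finset.sum_Ico_add' f a n 1, Finset.mul_sum, Finset.mul_sum,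
    Finset.sum_add_distrib]

end Ring

section OrderedField

variable {K : Type*} [Field K] [LinearOrder K] [IsStrictOrderedRing K]

section Mediant

variable {x y z w u v : K}

theorem div_le_weighted_mediant (hy : 0 < y) (hw : 0 < w) (hv : 0 ≤ v)
    (hden : 0 < u * y + v * w) (h : x / y ≤ z / w) :
    x / y ≤ (u * x + v * z) / (u * y + v * w) := by
  rw [div_le_div_iff₀ hy hw] at h
  rw [div_le_div_iff₀ hy hden]
  linear_combination v * h

theorem weighted_mediant_le_div (hy : 0 < y) (hw : 0 < w) (hu : 0 ≤ u)
    (hden : 0 < u * y + v * w) (h : x / y ≤ z / w) :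
    (u * x + v * z) / (u * y + v * w) ≤ z / w := by
  rw [div_le_div_iff₀ hy hw] at h
  rw [div_le_div_iff₀ hden hw]
  linear_combination u * h

end Mediant

theorem sum_div_sum_le_sum_div_sum_of_subset {ι : Type*} {s t : Finset ι} {p q : ι → K}
    (hst : s ⊆ t) (hs : s.Nonempty) (hq : ∀ i ∈ t, 0 < q i)
    (h : ∀ i ∈ s, ∀ j ∈ t, j ∉ s → p i / q i ≤ p j / q j) :
    (∑ i ∈ s, p i) / ∑ i ∈ s, q i ≤ (∑ i ∈ t, p i) / ∑ i ∈ t, q i := by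
  classical
  have cross : (∑ i ∈ s, p i) * ∑ j ∈ t \ s, q j ≤ (∑ j ∈ t \ s, p j) * ∑ i ∈ s, q i := by
    rw [mul_comm (∑ j ∈ t \ s, p j), Finset.sum_mul_sum, Finset.sum_mul_sum]
    refine Finset.sum_le_sum fun i hi => Finset.sum_le_sum fun j hj => ?_
    obtain ⟨hjt, hjs⟩ := Finset.mem_sdiff.mp hj
    rw [mul_comm (q i)]
    exact (div_le_div_iff₀ (hq i (hst hi)) (hq j hjt)).mp (h i hi j hjt hjs)
  have hqs : 0 < ∑ i ∈ s, q i := Finset.sum_pos (fun i hi => hq i (hst hi)) hs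
  have hqt : 0 < ∑ i ∈ t, q i := Finset.sum_pos hq (hs.mono hst)
  rw [div_le_div_iff₀ hqs hqt, ← Finset.sum_sdiff hst, ← Finset.sum_sdiff hst]
  linear_combination cross

theorem monotoneOn_sum_Ico_div_sum_Ico {a : ℕ} {p q : ℕ → K} (hq : ∀ k, a ≤ k → 0 < q k)
    (hratio : MonotoneOn (fun k => p k / q k) (Set.Ici a)) :
    MonotoneOn (fun n => (∑ k ∈ Finset.Ico a n, p k) / ∑ k ∈ Finset.Ico a n, q k)
      (Set.Ici (a + 1)) := by
  intro m hm n _ hmn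
  refine sum_div_sum_le_sum_div_sum_of_subset (Finset.Ico_subset_Ico_right hmn)
    (Finset.nonempty_Ico.mpr hm) (fun k hk => hq k (Finset.mem_Ico.mp hk).1) ?_
  intro i hi j hj hjm
  rw [Finset.mem_Ico] at hi hj hjm
  exact hratio hi.1 hj.1 (by lia)

section Average

variable {a : ℕ} {lam : K} {ψ φ : ℕ → K}

theorem average_succ_pos (hlam : lam ∈ Set.Icc 0 1) (hφ : ∀ k, a ≤ k → 0 < φ k) {k : ℕ}
    (hk : a ≤ k) : 0 < lam * φ k + (1 - lam) * φ (k + 1) :=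
  convex_Ioi (0 : K) (hφ k hk) (hφ (k + 1) (by lia)) hlam.1 (sub_nonneg.mpr hlam.2)
    (add_sub_cancel _ _)

theorem monotoneOn_average_succ_div (hlam : lam ∈ Set.Icc 0 1) (hφ : ∀ k, a ≤ k → 0 < φ k)
    (hratio : MonotoneOn (fun k => ψ k / φ k) (Set.Ici a)) :
    MonotoneOn
      (fun k => (lam * ψ k + (1 - lam) * ψ (k + 1)) / (lam * φ k + (1 - lam) * φ (k + 1)))
      (Set.Ici a) := by
  have ratio_le_succ {k : ℕ} (hk : a ≤ k) : ψ k / φ k ≤ ψ (k + 1) / φ (k + 1) :=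
    hratio hk (Nat.le_succ_of_le hk) k.le_succ
  intro i hi j hj hij
  obtain rfl | hlt := hij.eq_or_lt
  · rfl
  have hi' : a ≤ i + 1 := Nat.le_succ_of_le hi
  have hj' : a ≤ j + 1 := Nat.le_succ_of_le hj
  calc (lam * ψ i + (1 - lam) * ψ (i + 1)) / (lam * φ i + (1 - lam) * φ (i + 1))
      ≤ ψ (i + 1) / φ (i + 1) := weighted_mediant_le_div (hφ i hi) (hφ _ hi') hlam.1
        (average_succ_pos hlam hφ hi) (ratio_le_succ hi)
    _ ≤ ψ j / φ j := hratio hi' hj hlt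
    _ ≤ (lam * ψ j + (1 - lam) * ψ (j + 1)) / (lam * φ j + (1 - lam) * φ (j + 1)) :=
      div_le_weighted_mediant (hφ j hj) (hφ _ hj') (sub_nonneg.mpr hlam.2)
        (average_succ_pos hlam hφ hj) (ratio_le_succ hj)

theorem quotient_diamond_alpha_sum_monotone_general (hlam : lam ∈ Set.Icc 0 1)
    (hφ : ∀ k, a ≤ k → 0 < φ k) (hratio : MonotoneOn (fun k => ψ k / φ k) (Set.Ici a)) :
    MonotoneOn (fun n => diamondAlphaSum lam a ψ n / diamondAlphaSum lam a φ n)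
      (Set.Ici (a + 1)) := by
  simp only [diamondAlphaSum_eq_sum]
  exact monotoneOn_sum_Ico_div_sum_Ico (fun _ => average_succ_pos hlam hφ)
    (monotoneOn_average_succ_div hlam hφ hratio)

end Average

end OrderedField

theorem quotient_diamond_alpha_sum_monotone
    (a : ℕ) (lam : ℝ) (hlam : lam ∈ Set.Icc (0 : ℝ) 1)
    (ψ φ : ℕ → ℝ) (hφpos : ∀ k, 0 < φ k)
    (hφmono : Monotone φ)
    (hratio : Monotone fun k => ψ k / φ k) :
    ∀ n₁ n₂ : ℕ, a + 1 ≤ n₁ → n₁ ≤ n₂ →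
      (lam * ∑ k ∈ Finset.Ico a n₁, ψ k + (1 - lam) * ∑ k ∈ Finset.Ico (a + 1) (n₁ + 1), ψ k) /
        (lam * ∑ k ∈ Finset.Ico a n₁, φ k + (1 - lam) * ∑ k ∈ Finset.Ico (a + 1) (n₁ + 1), φ k) ≤
      (lam * ∑ k ∈ Finset.Ico a n₂, ψ k + (1 - lam) * ∑ k ∈ Finset.Ico (a + 1) (n₂ + 1), ψ k) /
        (lam * ∑ k ∈ Finset.Ico a n₂, φ k + (1 - lam) * ∑ k ∈ Finset.Ico (a + 1) (n₂ + 1), φ k) :=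
  fun _ _ hn₁ hn => quotient_diamond_alpha_sum_monotone_general hlam (fun k _ => hφpos k)
    (hratio.monotoneOn _) hn₁ (hn₁.trans hn) hn
end

section
/- Let r > 0 and let (ψ_n)_{n∈ℕ}, (φ_n)_{n∈ℕ} be real sequences with φ_n > 0 for all n, such that n ↦ ψ_n/φ_n is increasing and ψ_0/φ_0 ≥ 1. Let T : (0,r) → (0,∞) be differentiable and decreasing. Suppose the power series Ψ(s) = ∑_{n=0}^∞ ψ_n s^n and Φ(s) = ∑_{n=0}^∞ φ_n s^n converge for every s ∈ (0,r). Then the function s ↦ (T(s) + Ψ(s)) / (T(s) + Φ(s)) is increasing on (0,r). -/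
/-!
Put `D = Ψ - Φ`. Cross-multiplying, `(T + Ψ) / (T + Φ)` is increasing as soon as `Ψ / Φ` is
increasing and `D` is nonnegative and increasing, because `T` is decreasing. The latter is termwise.
The former is Chebyshev's argument: `Ψ(y) Φ(x) - Ψ(x) Φ(y)` is half of
`∑ i, ∑ j, (ψ i φ j - ψ j φ i) (y ^ i x ^ j - x ^ i y ^ j)`, and for `x ≤ y` the two factors of
each term have the same sign. Of the powers only the sign of the minors
`x ^ i y ^ j - x ^ j y ^ i` (`i ≤ j`), nonnegativity and monotonicity matter.
-/

section Chebyshev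

variable {ι R : Type*} [LinearOrder ι] [CommRing R] [LinearOrder R] [IsStrictOrderedRing R]
  {a b u v : ι → R}

theorem minor_mul_minor_nonneg (hab : ∀ i j, i ≤ j → a i * b j ≤ a j * b i)
    (huv : ∀ i j, i ≤ j → u i * v j ≤ u j * v i) (i j : ι) :
    0 ≤ (a i * b j - a j * b i) * (u i * v j - u j * v i) := by
  rcases le_total i j with hij | hji
  · exact mul_nonneg_of_nonpos_of_nonpos (sub_nonpos.mpr (hab i j hij))
      (sub_nonpos.mpr (huv i j hij))
  · exact mul_nonneg (sub_nonneg.mpr (hab j i hji)) (sub_nonneg.mpr (huv j i hji))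

theorem sum_mul_sum_le_sum_mul_sum_of_minors (hab : ∀ i j, i ≤ j → a i * b j ≤ a j * b i)
    (huv : ∀ i j, i ≤ j → u i * v j ≤ u j * v i) (s : Finset ι) :
    (∑ i ∈ s, a i * v i) * ∑ i ∈ s, b i * u i ≤ (∑ i ∈ s, a i * u i) * ∑ i ∈ s, b i * v i := by
  have double_sum_nonneg :
      0 ≤ ∑ i ∈ s, ∑ j ∈ s, (a i * b j - a j * b i) * (u i * v j - u j * v i) :=
    Finset.sum_nonneg fun i _ => Finset.sum_nonneg fun j _ => minor_mul_minor_nonneg hab huv i j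
  have double_sum_eq :
      ∑ i ∈ s, ∑ j ∈ s, (a i * b j - a j * b i) * (u i * v j - u j * v i) =
        2 * ((∑ i ∈ s, a i * u i) * (∑ i ∈ s, b i * v i) -
          (∑ i ∈ s, a i * v i) * ∑ i ∈ s, b i * u i) := by
    calc
      _ = ∑ i ∈ s, ∑ j ∈ s,
            ((a i * u i) * (b j * v j) - (a i * v i) * (b j * u j) -
              (b i * u i) * (a j * v j) + (b i * v i) * (a j * u j)) :=
        Finset.sum_congr rfl fun i _ => Finset.sum_congr rfl fun j _ => by ring
      _ = _ := by
        simp only [Finset.sum_add_distrib, Finset.sum_sub_distrib, ← Finset.sum_mul_sum]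
        ring
  linarith

theorem tsum_mul_tsum_le_tsum_mul_tsum_of_minors [TopologicalSpace R] [ContinuousMul R]
    [OrderClosedTopology R] (hab : ∀ i j, i ≤ j → a i * b j ≤ a j * b i)
    (huv : ∀ i j, i ≤ j → u i * v j ≤ u j * v i)
    (hau : Summable fun i => a i * u i) (hav : Summable fun i => a i * v i)
    (hbu : Summable fun i => b i * u i) (hbv : Summable fun i => b i * v i) :
    (∑' i, a i * v i) * ∑' i, b i * u i ≤ (∑' i, a i * u i) * ∑' i, b i * v i :=
  le_of_tendsto_of_tendsto' (Filter.Tendsto.mul hav.hasSum hbu.hasSum)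
    (Filter.Tendsto.mul hau.hasSum hbv.hasSum)
    (sum_mul_sum_le_sum_mul_sum_of_minors hab huv)

end Chebyshev

theorem pow_mul_pow_le_pow_mul_pow_of_le {R : Type*} [CommSemiring R] [PartialOrder R]
    [IsOrderedRing R] {x y : R} (hx : 0 ≤ x) (hxy : x ≤ y) {i j : ℕ} (hij : i ≤ j) :
    y ^ i * x ^ j ≤ y ^ j * x ^ i := by
  obtain ⟨k, rfl⟩ := Nat.exists_eq_add_of_le hij
  have hy : 0 ≤ y := hx.trans hxy
  calc
    y ^ i * x ^ (i + k) = y ^ i * x ^ i * x ^ k := by ring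
    _ ≤ y ^ i * x ^ i * y ^ k := by gcongr
    _ = y ^ (i + k) * x ^ i := by ring

section Quotient

variable {𝕜 : Type*} [Field 𝕜] [LinearOrder 𝕜] [IsStrictOrderedRing 𝕜]

theorem add_div_add_le_add_div_add_of_sub_le_sub {t t' p p' q q' : 𝕜}
    (ht' : 0 < t') (htt' : t' ≤ t) (hq : 0 ≤ q) (hq' : 0 ≤ q') (hqp : q ≤ p)
    (hsub : p - q ≤ p' - q') (hcross : p * q' ≤ p' * q) :
    (t + p) / (t + q) ≤ (t' + p') / (t' + q') := by
  have ht : 0 < t := ht'.trans_le htt'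
  have hmul : t' * (p - q) ≤ t * (p' - q') :=
    mul_le_mul htt' hsub (sub_nonneg.mpr hqp) ht.le
  rw [div_le_div_iff₀ (by positivity) (by positivity)]
  linarith

variable [TopologicalSpace 𝕜] [IsTopologicalRing 𝕜] [OrderClosedTopology 𝕜]

theorem quotient_T_plus_power_series_monotone_general {ι α : Type*} [LinearOrder ι] [Preorder α]
    {S : Set α} {K : ι → α → 𝕜} {ψ φ : ι → 𝕜} {T : α → 𝕜}
    (hKnonneg : ∀ i, ∀ x ∈ S, 0 ≤ K i x) (hKmono : ∀ i, MonotoneOn (K i) S)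
    (hKminor : ∀ x ∈ S, ∀ y ∈ S, x ≤ y → ∀ i j, i ≤ j → K i y * K j x ≤ K j y * K i x)
    (hφpos : ∀ i, 0 < φ i) (hratio : Monotone fun i => ψ i / φ i) (hφψ : ∀ i, φ i ≤ ψ i)
    (hTpos : ∀ x ∈ S, 0 < T x) (hTdec : AntitoneOn T S)
    (hψsum : ∀ x ∈ S, Summable fun i => ψ i * K i x)
    (hφsum : ∀ x ∈ S, Summable fun i => φ i * K i x) :
    MonotoneOn (fun x => (T x + ∑' i, ψ i * K i x) / (T x + ∑' i, φ i * K i x)) S := by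
  intro x hx y hy hxy
  have Φ_nonneg : ∀ z ∈ S, 0 ≤ ∑' i, φ i * K i z := fun z hz =>
    tsum_nonneg fun i => mul_nonneg (hφpos i).le (hKnonneg i z hz)
  have Φ_le_Ψ : ∑' i, φ i * K i x ≤ ∑' i, ψ i * K i x :=
    (hφsum x hx).tsum_le_tsum (fun i => mul_le_mul_of_nonneg_right (hφψ i) (hKnonneg i x hx))
      (hψsum x hx)
  have sub_term_le (i : ι) : ψ i * K i x - φ i * K i x ≤ ψ i * K i y - φ i * K i y := by
    simp only [← sub_mul]
    exact mul_le_mul_of_nonneg_left (hKmono i hx hy hxy) (sub_nonneg.mpr (hφψ i))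
  have Ψ_sub_Φ_le : ∑' i, ψ i * K i x - ∑' i, φ i * K i x ≤
      ∑' i, ψ i * K i y - ∑' i, φ i * K i y :=
    hasSum_le sub_term_le ((hψsum x hx).hasSum.sub (hφsum x hx).hasSum)
      ((hψsum y hy).hasSum.sub (hφsum y hy).hasSum)
  have Ψ_mul_Φ_le : (∑' i, ψ i * K i x) * ∑' i, φ i * K i y ≤
      (∑' i, ψ i * K i y) * ∑' i, φ i * K i x :=
    tsum_mul_tsum_le_tsum_mul_tsum_of_minors
      (fun i j hij => (div_le_div_iff₀ (hφpos i) (hφpos j)).mp (hratio hij))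
      (hKminor x hx y hy hxy) (hψsum y hy) (hψsum x hx) (hφsum y hy) (hφsum x hx)
  exact add_div_add_le_add_div_add_of_sub_le_sub (hTpos y hy) (hTdec hx hy hxy)
    (Φ_nonneg x hx) (Φ_nonneg y hy) Φ_le_Ψ Ψ_sub_Φ_le Ψ_mul_Φ_le

end Quotient

theorem quotient_T_plus_power_series_monotone
    (r : ℝ) (hr : 0 < r) (ψ φ : ℕ → ℝ) (hφpos : ∀ n, 0 < φ n)
    (hratio : Monotone fun n => ψ n / φ n)
    (hinit : 1 ≤ ψ 0 / φ 0)
    (T : ℝ → ℝ)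
    (hTpos : ∀ s ∈ Set.Ioo (0 : ℝ) r, 0 < T s)
    (hTdiff : DifferentiableOn ℝ T (Set.Ioo (0 : ℝ) r))
    (hTdec : AntitoneOn T (Set.Ioo (0 : ℝ) r))
    (hψsum : ∀ s ∈ Set.Ioo (0 : ℝ) r, Summable fun n => ψ n * s ^ n)
    (hφsum : ∀ s ∈ Set.Ioo (0 : ℝ) r, Summable fun n => φ n * s ^ n) :
    MonotoneOn
      (fun s => (T s + ∑' n : ℕ, ψ n * s ^ n) / (T s + ∑' n : ℕ, φ n * s ^ n))
      (Set.Ioo (0 : ℝ) r) :=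
  quotient_T_plus_power_series_monotone_general (K := fun n s => s ^ n)
    (fun n _ hx => pow_nonneg hx.1.le n) (fun n _ hx _ _ hxy => pow_le_pow_left₀ hx.1.le hxy n)
    (fun _ hx _ _ hxy _ _ hij => pow_mul_pow_le_pow_mul_pow_of_le hx.1.le hxy hij)
    hφpos hratio (fun n => (one_le_div (hφpos n)).mp (hinit.trans (hratio n.zero_le)))
    hTpos hTdec hψsum hφsum
end

section
/- Let 0 < a < b, let m ≥ 1, and for each l ∈ {1,…,m} let ψ_l, φ_l : [0,∞) → (0,∞) be measurable functions such that υ ↦ ψ_l(υ)/φ_l(υ) is increasing on [0,∞). Suppose that for every s ∈ (a,b) and every l the functions υ ↦ ψ_l(υ)s^υ and υ ↦ φ_l(υ)s^υ are integrable on [0,∞). Then the function s ↦ (∏_{l=1}^m ∫_0^∞ ψ_l(υ) s^υ dυ) / (∏_{l=1}^m ∫_0^∞ φ_l(υ) s^υ dυ) is increasing on (a,b). -/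
open MeasureTheory Set

/-!
Write `K s υ = s ^ υ` and let `s ≤ t`. Since `ψ / φ` and `K t / K s` are both increasing in `υ`,
the determinants `ψ x * φ y - φ x * ψ y` and `K t x * K s y - K s x * K t y` have a nonnegative
product for all `x`, `y`. By Andréief's identity, half the double integral of this product is
`(∫ ψ * K t) * (∫ φ * K s) - (∫ ψ * K s) * (∫ φ * K t)`, so each factor
`(∫ ψ * K s) / (∫ φ * K s)` of the quotient is increasing in `s`. A product of nonnegative
increasing functions is increasing.
-/

lemma det_mul_det_nonneg_of_monovaryOn_div {X 𝕜 : Type*} [Field 𝕜] [LinearOrder 𝕜]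
    [IsStrictOrderedRing 𝕜] {S : Set X} {f g p q : X → 𝕜}
    (hg : ∀ x ∈ S, 0 < g x) (hq : ∀ x ∈ S, 0 < q x)
    (h : MonovaryOn (fun x => f x / g x) (fun x => p x / q x) S)
    {x y : X} (hx : x ∈ S) (hy : y ∈ S) :
    0 ≤ (f x * g y - g x * f y) * (p x * q y - q x * p y) := by
  have hgx := hg x hx
  have hgy := hg y hy
  have hqx := hq x hx
  have hqy := hq y hy
  calc 0 ≤ g x * g y * (q x * q y) * ((f x / g x - f y / g y) * (p x / q x - p y / q y)) :=
        mul_nonneg (by positivity) (h.sub_mul_sub_nonneg hy hx)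
    _ = (f x * g y - g x * f y) * (p x * q y - q x * p y) := by field_simp

section SetIntegral

variable {X : Type*} [MeasurableSpace X] {μ : Measure X} {S : Set X}

lemma integral_prod_det_mul_det {𝕜 : Type*} [RCLike 𝕜] [SFinite μ] {f g p q : X → 𝕜}
    (hfp : Integrable (fun x => f x * p x) μ) (hfq : Integrable (fun x => f x * q x) μ)
    (hgp : Integrable (fun x => g x * p x) μ) (hgq : Integrable (fun x => g x * q x) μ) :
    ∫ z, (f z.1 * g z.2 - g z.1 * f z.2) * (p z.1 * q z.2 - q z.1 * p z.2) ∂μ.prod μ =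
      2 * ((∫ x, f x * p x ∂μ) * (∫ x, g x * q x ∂μ) -
        (∫ x, f x * q x ∂μ) * (∫ x, g x * p x ∂μ)) := by
  have hdiag := (hfp.mul_prod hgq).fun_add (hgq.mul_prod hfp)
  have hcross := (hfq.mul_prod hgp).fun_add (hgp.mul_prod hfq)
  calc ∫ z, (f z.1 * g z.2 - g z.1 * f z.2) * (p z.1 * q z.2 - q z.1 * p z.2) ∂μ.prod μ
      = ∫ z, (f z.1 * p z.1 * (g z.2 * q z.2) + g z.1 * q z.1 * (f z.2 * p z.2)) -
          (f z.1 * q z.1 * (g z.2 * p z.2) + g z.1 * p z.1 * (f z.2 * q z.2)) ∂μ.prod μ := by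
        congr with z
        ring
    _ = ((∫ x, f x * p x ∂μ) * (∫ x, g x * q x ∂μ) +
          (∫ x, g x * q x ∂μ) * (∫ x, f x * p x ∂μ)) -
        ((∫ x, f x * q x ∂μ) * (∫ x, g x * p x ∂μ) +
          (∫ x, g x * p x ∂μ) * (∫ x, f x * q x ∂μ)) := by
        rw [integral_sub hdiag hcross,
          integral_add (hfp.mul_prod hgq) (hgq.mul_prod hfp),
          integral_add (hfq.mul_prod hgp) (hgp.mul_prod hfq)]
        simp only [← integral_prod_mul]
    _ = 2 * ((∫ x, f x * p x ∂μ) * (∫ x, g x * q x ∂μ) -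
          (∫ x, f x * q x ∂μ) * (∫ x, g x * p x ∂μ)) := by ring

lemma setIntegral_mul_setIntegral_le_of_monovaryOn_div [SFinite μ] (hS : MeasurableSet S)
    {f g p q : X → ℝ} (hg : ∀ x ∈ S, 0 < g x) (hq : ∀ x ∈ S, 0 < q x)
    (h : MonovaryOn (fun x => f x / g x) (fun x => p x / q x) S)
    (hfp : IntegrableOn (fun x => f x * p x) S μ) (hfq : IntegrableOn (fun x => f x * q x) S μ)
    (hgp : IntegrableOn (fun x => g x * p x) S μ) (hgq : IntegrableOn (fun x => g x * q x) S μ) :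
    (∫ x in S, f x * q x ∂μ) * (∫ x in S, g x * p x ∂μ) ≤
      (∫ x in S, f x * p x ∂μ) * (∫ x in S, g x * q x ∂μ) := by
  have det_nonneg : 0 ≤ ∫ z, (f z.1 * g z.2 - g z.1 * f z.2) * (p z.1 * q z.2 - q z.1 * p z.2)
      ∂(μ.restrict S).prod (μ.restrict S) := by
    rw [Measure.prod_restrict]
    exact setIntegral_nonneg (hS.prod hS) fun z hz =>
      det_mul_det_nonneg_of_monovaryOn_div hg hq h hz.1 hz.2
  rw [integral_prod_det_mul_det hfp hfq hgp hgq] at det_nonneg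
  linarith

lemma setIntegral_pos_of_forall_mem_pos {f : X → ℝ} (hS : MeasurableSet S) (hμS : μ S ≠ 0)
    (hf : IntegrableOn f S μ) (hpos : ∀ x ∈ S, 0 < f x) : 0 < ∫ x in S, f x ∂μ := by
  have hsupport : Function.support f ∩ S = S := inter_eq_right.2 fun x hx => (hpos x hx).ne'
  rw [setIntegral_pos_iff_support_of_nonneg_ae
    (ae_restrict_of_forall_mem hS fun x hx => (hpos x hx).le) hf, hsupport]
  exact pos_iff_ne_zero.2 hμS

end SetIntegral

lemma monotone_rpow_div_rpow {s t : ℝ} (hs : 0 < s) (hst : s ≤ t) :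
    Monotone fun x : ℝ => t ^ x / s ^ x := by
  simpa only [Real.div_rpow (hs.le.trans hst) hs.le] using
    Real.monotone_rpow_of_base_ge_one ((one_le_div hs).2 hst)

theorem quotient_product_integral_rpow_kernel_monotone_general
    {X ι α : Type*} [MeasurableSpace X] [Preorder α] {μ : Measure X} [SFinite μ]
    {S : Set X} (hS : MeasurableSet S) (hμS : μ S ≠ 0)
    {A : Set α} {K : α → X → ℝ} (hK : ∀ s ∈ A, ∀ x ∈ S, 0 < K s x)
    {I : Finset ι} {ψ φ : ι → X → ℝ}
    (hψ : ∀ l ∈ I, ∀ x ∈ S, 0 ≤ ψ l x) (hφ : ∀ l ∈ I, ∀ x ∈ S, 0 < φ l x)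
    (hmono : ∀ l ∈ I, ∀ s ∈ A, ∀ t ∈ A, s ≤ t →
      MonovaryOn (fun x => ψ l x / φ l x) (fun x => K t x / K s x) S)
    (hψint : ∀ s ∈ A, ∀ l ∈ I, IntegrableOn (fun x => ψ l x * K s x) S μ)
    (hφint : ∀ s ∈ A, ∀ l ∈ I, IntegrableOn (fun x => φ l x * K s x) S μ) :
    MonotoneOn
      (fun s => (∏ l ∈ I, ∫ x in S, ψ l x * K s x ∂μ) / ∏ l ∈ I, ∫ x in S, φ l x * K s x ∂μ)
      A := by
  have hφpos : ∀ s ∈ A, ∀ l ∈ I, 0 < ∫ x in S, φ l x * K s x ∂μ := fun s hs l hl =>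
    setIntegral_pos_of_forall_mem_pos hS hμS (hφint s hs l hl) fun x hx =>
      mul_pos (hφ l hl x hx) (hK s hs x hx)
  have hψnonneg : ∀ s ∈ A, ∀ l ∈ I, 0 ≤ ∫ x in S, ψ l x * K s x ∂μ := fun s hs l hl =>
    setIntegral_nonneg hS fun x hx => mul_nonneg (hψ l hl x hx) (hK s hs x hx).le
  intro s hs t ht hst
  simp only [← Finset.prod_div_distrib]
  refine Finset.prod_le_prod
    (fun l hl => div_nonneg (hψnonneg s hs l hl) (hφpos s hs l hl).le) fun l hl => ?_
  rw [div_le_div_iff₀ (hφpos s hs l hl) (hφpos t ht l hl)]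
  exact setIntegral_mul_setIntegral_le_of_monovaryOn_div hS (hφ l hl) (hK s hs)
    (hmono l hl s hs t ht hst) (hψint t ht l hl) (hψint s hs l hl) (hφint t ht l hl)
    (hφint s hs l hl)

theorem quotient_product_integral_rpow_kernel_monotone
    (a b : ℝ) (ha : 0 < a) (hab : a < b) (m : ℕ) (hm : 1 ≤ m)
    (ψ φ : Fin m → ℝ → ℝ)
    (hψm : ∀ l, Measurable (ψ l)) (hφm : ∀ l, Measurable (φ l))
    (hψpos : ∀ l, ∀ υ : ℝ, 0 ≤ υ → 0 < ψ l υ)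
    (hφpos : ∀ l, ∀ υ : ℝ, 0 ≤ υ → 0 < φ l υ)
    (hratio : ∀ l, MonotoneOn (fun υ => ψ l υ / φ l υ) (Ici (0 : ℝ)))
    (hψint : ∀ s ∈ Ioo a b, ∀ l,
      IntegrableOn (fun υ => ψ l υ * s ^ υ) (Ici (0 : ℝ)) volume)
    (hφint : ∀ s ∈ Ioo a b, ∀ l,
      IntegrableOn (fun υ => φ l υ * s ^ υ) (Ici (0 : ℝ)) volume) :
    MonotoneOn
      (fun s => (∏ l : Fin m, ∫ υ in Ici (0 : ℝ), ψ l υ * s ^ υ) /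
        (∏ l : Fin m, ∫ υ in Ici (0 : ℝ), φ l υ * s ^ υ))
      (Ioo a b) := by
  exact quotient_product_integral_rpow_kernel_monotone_general measurableSet_Ici (by simp)
    (fun _ hs υ _ => Real.rpow_pos_of_pos (ha.trans hs.1) υ)
    (fun l _ υ hυ => (hψpos l υ hυ).le) (fun l _ => hφpos l)
    (fun l _ _ hs _ _ hst =>
      (hratio l).monovaryOn ((monotone_rpow_div_rpow (ha.trans hs.1) hst).monotoneOn _))
    (fun s hs l _ => hψint s hs l) (fun s hs l _ => hφint s hs l)
end

section
/- Let m ≥ 1 and for each l ∈ {1,…,m} let ψ_l, φ_l : ℕ → (0,∞) be sequences with n ↦ ψ_l(n)/φ_l(n) increasing, and let w_l : ℝ × ℕ → (0,∞) be such that for each n the map s ↦ w_l(s,n) is differentiable on ℝ and for every s ∈ ℝ the map n ↦ (∂w_l/∂s)(s,n) / w_l(s,n) is increasing on ℕ. Suppose that for every s ∈ ℝ and every l the series ∑_{n=0}^∞ ψ_l(n) w_l(s,n) and ∑_{n=0}^∞ φ_l(n) w_l(s,n) converge, are differentiable in s, and their derivatives are given by termwise differentiation (with the differentiated series converging absolutely).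 Then the function s ↦ (∏_{l=1}^m ∑_{n=0}^∞ ψ_l(n) w_l(s,n)) / (∏_{l=1}^m ∑_{n=0}^∞ φ_l(n) w_l(s,n)) is increasing on ℝ. -/
/-!
For `s ≤ t`, put the weights `φ n * w s n` on the index set. Chebyshev's sum inequality for the
functions `ψ n / φ n` and `w t n / w s n` then compares the quotients of series at `s` and `t`
directly. These functions vary together: if `ψ i / φ i < ψ j / φ j`, then `w · i` has the
smaller logarithmic derivative at every parameter, so `w · j / w · i` increases from `s` to `t`.
-/

section Chebyshev

open Finset

variable {ι R : Type*} [CommRing R] [LinearOrder R] [IsStrictOrderedRing R] {c f g : ι → R}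

lemma sum_mul_mul_sum_mul_le_of_monovaryOn {s : Finset ι} (hc : ∀ i ∈ s, 0 ≤ c i)
    (hfg : MonovaryOn f g s) :
    (∑ i ∈ s, c i * f i) * ∑ i ∈ s, c i * g i ≤ (∑ i ∈ s, c i) * ∑ i ∈ s, c i * (f i * g i) := by
  have double_sum_nonneg :
      0 ≤ ∑ i ∈ s, ∑ j ∈ s, c i * c j * ((f j - f i) * (g j - g i)) :=
    sum_nonneg fun i hi ↦ sum_nonneg fun j hj ↦
      mul_nonneg (mul_nonneg (hc i hi) (hc j hj)) (hfg.sub_mul_sub_nonneg hi hj)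
  have expand (i j : ι) : c i * c j * ((f j - f i) * (g j - g i)) =
      c i * (c j * (f j * g j)) - c i * g i * (c j * f j) - c i * f i * (c j * g j)
        + c i * (f i * g i) * c j := by
    ring
  simp only [expand, sum_add_distrib, sum_sub_distrib, ← sum_mul_sum] at double_sum_nonneg
  linarith

lemma tsum_mul_mul_tsum_mul_le_of_monovary [TopologicalSpace R] [OrderClosedTopology R]
    [ContinuousMul R] (hc : ∀ i, 0 ≤ c i) (hfg : Monovary f g) (hsc : Summable c)
    (hsf : Summable fun i ↦ c i * f i) (hsg : Summable fun i ↦ c i * g i)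
    (hsfg : Summable fun i ↦ c i * (f i * g i)) :
    (∑' i, c i * f i) * ∑' i, c i * g i ≤ (∑' i, c i) * ∑' i, c i * (f i * g i) :=
  le_of_tendsto_of_tendsto' (Filter.Tendsto.mul hsf.hasSum hsg.hasSum)
    (Filter.Tendsto.mul hsc.hasSum hsfg.hasSum) fun s ↦
      sum_mul_mul_sum_mul_le_of_monovaryOn (fun i _ ↦ hc i) (hfg.monovaryOn s)

end Chebyshev

lemma monotoneOn_div_of_logDeriv_le {D : Set ℝ} (hD : Convex ℝ D) {f g f' g' : ℝ → ℝ}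
    (hf : ∀ s ∈ D, 0 < f s) (hg : ∀ s ∈ D, 0 < g s)
    (hf' : ∀ s ∈ D, HasDerivWithinAt f (f' s) D s) (hg' : ∀ s ∈ D, HasDerivWithinAt g (g' s) D s)
    (hle : ∀ s ∈ D, f' s / f s ≤ g' s / g s) : MonotoneOn (g / f) D := by
  have hderiv : ∀ s ∈ D,
      HasDerivWithinAt (g / f) ((g' s * f s - g s * f' s) / f s ^ 2) D s :=
    fun s hs ↦ (hg' s hs).div (hf' s hs) (hf s hs).ne'
  refine monotoneOn_of_hasDerivWithinAt_nonneg hD (fun s hs ↦ (hderiv s hs).continuousWithinAt)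
    (fun s hs ↦ (hderiv s (interior_subset hs)).mono interior_subset) fun s hs ↦ ?_
  have hsD := interior_subset hs
  have hcross : f' s * g s ≤ g' s * f s :=
    (div_le_div_iff₀ (hf s hsD) (hg s hsD)).1 (hle s hsD)
  exact div_nonneg (by linarith) (sq_nonneg _)

lemma monovary_div_of_monovary_logDeriv {ι α : Type*} [LinearOrder α] {r : ι → α}
    {D : Set ℝ} (hD : Convex ℝ D) {w w' : ℝ → ι → ℝ} (hw : ∀ s ∈ D, ∀ n, 0 < w s n)
    (hderiv : ∀ s ∈ D, ∀ n, HasDerivWithinAt (fun t ↦ w t n) (w' s n) D s)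
    (hmono : ∀ s ∈ D, Monovary r (w' s / w s)) {s t : ℝ} (hs : s ∈ D) (ht : t ∈ D)
    (hst : s ≤ t) : Monovary r (w t / w s) := by
  refine Monovary.symm fun i j hij ↦ ?_
  have hquot : w s j / w s i ≤ w t j / w t i :=
    monotoneOn_div_of_logDeriv_le hD (fun x hx ↦ hw x hx i) (fun x hx ↦ hw x hx j)
      (fun x hx ↦ hderiv x hx i) (fun x hx ↦ hderiv x hx j)
      (fun x hx ↦ (hmono x hx).symm hij) hs ht hst
  rw [div_le_div_iff₀ (hw s hs i) (hw t ht i)] at hquot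
  rw [Pi.div_apply, Pi.div_apply, div_le_div_iff₀ (hw s hs i) (hw s hs j)]
  linarith

section Series

open Finset

variable {ι : Type*} [Nonempty ι]

lemma tsum_mul_div_tsum_mul_le_of_monovary {ψ φ u v : ι → ℝ} (hφ : ∀ n, 0 < φ n)
    (hu : ∀ n, 0 < u n) (hv : ∀ n, 0 < v n) (hmono : Monovary (ψ / φ) (v / u))
    (hψu : Summable fun n ↦ ψ n * u n) (hφu : Summable fun n ↦ φ n * u n)
    (hψv : Summable fun n ↦ ψ n * v n) (hφv : Summable fun n ↦ φ n * v n) :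
    (∑' n, ψ n * u n) / ∑' n, φ n * u n ≤ (∑' n, ψ n * v n) / ∑' n, φ n * v n := by
  obtain ⟨k⟩ := ‹Nonempty ι›
  have hφu_pos : 0 < ∑' n, φ n * u n :=
    hφu.tsum_pos (fun n ↦ (mul_pos (hφ n) (hu n)).le) k (mul_pos (hφ k) (hu k))
  have hφv_pos : 0 < ∑' n, φ n * v n :=
    hφv.tsum_pos (fun n ↦ (mul_pos (hφ n) (hv n)).le) k (mul_pos (hφ k) (hv k))
  have hψu_eq (n : ι) : φ n * u n * (ψ / φ) n = ψ n * u n := by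
    rw [Pi.div_apply, mul_right_comm, mul_div_cancel₀ _ (hφ n).ne']
  have hφv_eq (n : ι) : φ n * u n * (v / u) n = φ n * v n := by
    rw [Pi.div_apply, mul_assoc, mul_div_cancel₀ _ (hu n).ne']
  have hψv_eq (n : ι) : φ n * u n * ((ψ / φ) n * (v / u) n) = ψ n * v n := by
    rw [← mul_assoc, hψu_eq, Pi.div_apply, mul_assoc, mul_div_cancel₀ _ (hu n).ne']
  have hchebyshev := tsum_mul_mul_tsum_mul_le_of_monovary (c := fun n ↦ φ n * u n)
    (fun n ↦ (mul_pos (hφ n) (hu n)).le) hmono hφu (by simpa only [hψu_eq] using hψu)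
    (by simpa only [hφv_eq] using hφv) (by simpa only [hψv_eq] using hψv)
  simp only [hψu_eq, hφv_eq, hψv_eq] at hchebyshev
  rwa [div_le_div_iff₀ hφu_pos hφv_pos, mul_comm (∑' n, ψ n * v n)]

theorem quotient_product_parameter_series_monotone_general {κ : Type*} (L : Finset κ)
    {D : Set ℝ} (hD : Convex ℝ D) {ψ φ : κ → ι → ℝ} {w w' : κ → ℝ → ι → ℝ}
    (hψ : ∀ l ∈ L, ∀ n, 0 ≤ ψ l n) (hφ : ∀ l ∈ L, ∀ n, 0 < φ l n)
    (hw : ∀ l ∈ L, ∀ s ∈ D, ∀ n, 0 < w l s n)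
    (hderiv : ∀ l ∈ L, ∀ s ∈ D, ∀ n, HasDerivWithinAt (fun t ↦ w l t n) (w' l s n) D s)
    (hmono : ∀ l ∈ L, ∀ s ∈ D, Monovary (ψ l / φ l) (w' l s / w l s))
    (hψw : ∀ l ∈ L, ∀ s ∈ D, Summable fun n ↦ ψ l n * w l s n)
    (hφw : ∀ l ∈ L, ∀ s ∈ D, Summable fun n ↦ φ l n * w l s n) :
    MonotoneOn (fun s ↦ (∏ l ∈ L, ∑' n, ψ l n * w l s n) / ∏ l ∈ L, ∑' n, φ l n * w l s n) D := by
  intro s hs t ht hst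
  simp only [← prod_div_distrib]
  refine prod_le_prod (fun l hl ↦ div_nonneg
    (tsum_nonneg fun n ↦ mul_nonneg (hψ l hl n) (hw l hl s hs n).le)
    (tsum_nonneg fun n ↦ mul_nonneg (hφ l hl n).le (hw l hl s hs n).le)) fun l hl ↦ ?_
  exact tsum_mul_div_tsum_mul_le_of_monovary (hφ l hl) (hw l hl s hs) (hw l hl t ht)
    (monovary_div_of_monovary_logDeriv hD (hw l hl) (hderiv l hl) (hmono l hl) hs ht hst)
    (hψw l hl s hs) (hφw l hl s hs) (hψw l hl t ht) (hφw l hl t ht)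

end Series

theorem quotient_product_parameter_series_monotone
    (m : ℕ) (hm : 1 ≤ m)
    (ψ φ : Fin m → ℕ → ℝ) (w ws : Fin m → ℝ → ℕ → ℝ)
    (hψpos : ∀ l n, 0 < ψ l n) (hφpos : ∀ l n, 0 < φ l n)
    (hratio : ∀ l, Monotone fun n => ψ l n / φ l n)
    (hwpos : ∀ l (s : ℝ) (n : ℕ), 0 < w l s n)
    (hwderiv : ∀ l (s : ℝ) (n : ℕ), HasDerivAt (fun t => w l t n) (ws l s n) s)
    (hlogmono : ∀ l (s : ℝ), Monotone fun n => ws l s n / w l s n)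
    (hψw : ∀ l (s : ℝ), Summable fun n => |ψ l n * w l s n|)
    (hφw : ∀ l (s : ℝ), Summable fun n => |φ l n * w l s n|)
    (hψws : ∀ l (s : ℝ), Summable fun n => |ψ l n * ws l s n|)
    (hφws : ∀ l (s : ℝ), Summable fun n => |φ l n * ws l s n|)
    (hΨderiv : ∀ l (s : ℝ),
      HasDerivAt (fun t => ∑' n : ℕ, ψ l n * w l t n) (∑' n : ℕ, ψ l n * ws l s n) s)
    (hΦderiv : ∀ l (s : ℝ),
      HasDerivAt (fun t => ∑' n : ℕ, φ l n * w l t n) (∑' n : ℕ, φ l n * ws l s n) s) :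
    Monotone fun s =>
      (∏ l : Fin m, ∑' n : ℕ, ψ l n * w l s n) /
        (∏ l : Fin m, ∑' n : ℕ, φ l n * w l s n) :=
  monotoneOn_univ.1 <| quotient_product_parameter_series_monotone_general Finset.univ convex_univ
    (fun l _ n ↦ (hψpos l n).le) (fun l _ ↦ hφpos l) (fun l _ s _ ↦ hwpos l s)
    (fun l _ s _ n ↦ (hwderiv l s n).hasDerivWithinAt)
    (fun l _ s _ ↦ (hratio l).monovary (hlogmono l s))
    (fun l _ s _ ↦ (hψw l s).of_abs) (fun l _ s _ ↦ (hφw l s).of_abs)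
end
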